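/- Let (A,m) be a free multiarrangement in K^ℓ with a locally heavy hyperplane H_0 = ker(α_0), m_0 = m(H_0), and homogeneous basis θ_1,...,θ_ℓ of D(A,m) with degrees d_1,...,d_ℓ. Then there exists an index j with d_j = m_0 and, after rescaling, θ_j(α_0) = α_0^{m_0}. -/

import Mathlib

open scoped Classical
open MvPolynomial

namespace ArrPaper

variable {K : Type*} [Field K] {ℓ : ℕ}

/-- The coordinate ring `S = K[x₁,…,x_ℓ]`. -/
noncomputable abbrev S (K : Type*) [Field K] (ℓ : ℕ) := MvPolynomial (Fin ℓ) K

/-- The linear form associated to a covector `c`. -/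
noncomputable def linForm (c : Fin ℓ → K) : S K ℓ :=
  ∑ i, MvPolynomial.C (c i) * MvPolynomial.X i

/-- The linear functional associated to a covector. -/
noncomputable def toFunc (c : Fin ℓ → K) : (Fin ℓ → K) →ₗ[K] K :=
  ∑ i, c i • LinearMap.proj i

/-- A (central) hyperplane arrangement, given by a finite set of nonzero,
pairwise non-proportional covectors (defining linear forms). -/
structure Arrangement (K : Type*) [Field K] (ℓ : ℕ) where
  hyps : Finset (Fin ℓ → K)
  ne_zero : ∀ c ∈ hyps, c ≠ 0
  nonparallel : ∀ c ∈ hyps, ∀ c' ∈ hyps, c ≠ c' → ∀ t : K, c' ≠ t • c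

/-- Derivations of the polynomial ring `S`. -/
abbrev Der (K : Type*) [Field K] (ℓ : ℕ) := Derivation K (S K ℓ) (S K ℓ)

/-- `θ` is a logarithmic derivation of the multiarrangement `(A, m)`, i.e.
`θ(α_H) ∈ α_H^{m(H)}·S` for all `H ∈ A`. -/
def IsLogDer (A : Arrangement K ℓ) (m : (Fin ℓ → K) → ℕ) (θ : Der K ℓ) : Prop :=
  ∀ c ∈ A.hyps, (linForm c) ^ (m c) ∣ θ (linForm c)

/-- `θ` is homogeneous of polynomial degree `d`: `θ(α)` is homogeneous of degree `d`
for every linear form `α`. -/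
def IsHomogOfDeg (θ : Der K ℓ) (d : ℕ) : Prop :=
  ∀ c : Fin ℓ → K, (θ (linForm c)).IsHomogeneous d

/-- `θ₁, …, θ_ℓ` form a basis of the `S`-module `D(A,m)`. -/
def IsDerBasis (A : Arrangement K ℓ) (m : (Fin ℓ → K) → ℕ) (θ : Fin ℓ → Der K ℓ) : Prop :=
  (∀ i, IsLogDer A m (θ i)) ∧
  ∀ η : Der K ℓ, IsLogDer A m η → ∃! f : Fin ℓ → S K ℓ, η = ∑ i, f i • θ i

/-- `(A,m)` is free with a homogeneous basis of degrees (exponents) `d`. -/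
def IsFreeWithExp (A : Arrangement K ℓ) (m : (Fin ℓ → K) → ℕ) (d : Fin ℓ → ℕ) : Prop :=
  ∃ θ : Fin ℓ → Der K ℓ, (∀ i, IsHomogOfDeg (θ i) (d i)) ∧ IsDerBasis A m θ

/-- `(A,m)` is a free multiarrangement. -/
def IsFree (A : Arrangement K ℓ) (m : (Fin ℓ → K) → ℕ) : Prop :=
  ∃ d : Fin ℓ → ℕ, IsFreeWithExp A m d

/-- `|m|`, the total multiplicity. -/
def msum (A : Arrangement K ℓ) (m : (Fin ℓ → K) → ℕ) : ℕ := ∑ c ∈ A.hyps, m c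

/-- The rank of an arrangement: the dimension of the span of its covectors. -/
noncomputable def rank (A : Arrangement K ℓ) : ℕ :=
  Module.finrank K (Submodule.span K (A.hyps : Set (Fin ℓ → K)))

/-- `A` is reducible: after a linear change of coordinates it is a product of two
arrangements in complementary (nonzero) subspaces.  In terms of covectors: the
covectors split between two complementary nonzero subspaces of the dual space. -/
def Reducible (A : Arrangement K ℓ) : Prop :=
  ∃ W₁ W₂ : Submodule K (Fin ℓ → K), W₁ ≠ ⊥ ∧ W₂ ≠ ⊥ ∧ W₁ ⊓ W₂ = ⊥ ∧ W₁ ⊔ W₂ = ⊤ ∧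
    ∀ c ∈ A.hyps, c ∈ W₁ ∨ c ∈ W₂

/-- The hyperplanes of the localization at a flat; the flat of codimension `r` is
encoded by the `r`-dimensional subspace `U` of the dual space spanned by the
covectors of the hyperplanes containing it. -/
noncomputable def locHyps (A : Arrangement K ℓ) (U : Submodule K (Fin ℓ → K)) :
    Finset (Fin ℓ → K) :=
  A.hyps.filter (· ∈ U)

/-- `U` encodes a flat of `A` of codimension `r` (an element of `L_r(A)`). -/
def IsFlatOfRank (A : Arrangement K ℓ) (U : Submodule K (Fin ℓ → K)) (r : ℕ) : Prop :=
  Module.finrank K U = r ∧ Submodule.span K (locHyps A U : Set (Fin ℓ → K)) = U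

/-- The localization `A_X` of `A` at the flat encoded by `U`. -/
noncomputable def localize (A : Arrangement K ℓ) (U : Submodule K (Fin ℓ → K)) :
    Arrangement K ℓ where
  hyps := locHyps A U
  ne_zero := fun c hc => A.ne_zero c (Finset.mem_filter.mp hc).1
  nonparallel := fun c hc c' hc' =>
    A.nonparallel c (Finset.mem_filter.mp hc).1 c' (Finset.mem_filter.mp hc').1

/-- `H₀` (given by covector `c₀`) is a heavy hyperplane of `(A,m)`. -/
def IsHeavy (A : Arrangement K ℓ) (m : (Fin ℓ → K) → ℕ) (c₀ : Fin ℓ → K) : Prop :=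
  c₀ ∈ A.hyps ∧ (∑ c ∈ A.hyps.erase c₀, m c) ≤ m c₀

/-- `H₀` (given by covector `c₀`) is a locally heavy hyperplane of `(A,m)`. -/
def IsLocallyHeavy (A : Arrangement K ℓ) (m : (Fin ℓ → K) → ℕ) (c₀ : Fin ℓ → K) : Prop :=
  c₀ ∈ A.hyps ∧ ∀ U : Submodule K (Fin ℓ → K), IsFlatOfRank A U 2 → c₀ ∈ U →
    3 ≤ (locHyps A U).card → (∑ c ∈ (locHyps A U).erase c₀, m c) ≤ m c₀

/-- `b` is the second Betti number of the rank-2 localization of `(A,m)` at `U`: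
the product of the nonzero exponents of this free rank-2 multiarrangement. -/
def IsLocalB2 (A : Arrangement K ℓ) (m : (Fin ℓ → K) → ℕ)
    (U : Submodule K (Fin ℓ → K)) (b : ℕ) : Prop :=
  ∃ d : Fin ℓ → ℕ, IsFreeWithExp (localize A U) m d ∧
    b = ∏ i ∈ Finset.univ.filter (fun i => d i ≠ 0), d i

/-- `b` is the second Betti number `b₂(A,m)` of the multiarrangement `(A,m)`. -/
def IsB2 (A : Arrangement K ℓ) (m : (Fin ℓ → K) → ℕ) (b : ℕ) : Prop :=
  ∃ bloc : Submodule K (Fin ℓ → K) → ℕ,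
    (∀ U, IsFlatOfRank A U 2 → IsLocalB2 A m U (bloc U)) ∧
    b = ∑ᶠ U ∈ {U : Submodule K (Fin ℓ → K) | IsFlatOfRank A U 2}, bloc U

/-- The second Betti number of a simple arrangement:
`b₂(A) = Σ_{X ∈ L₂(A)} (|A_X| - 1)`. -/
noncomputable def b2Simple (A : Arrangement K ℓ) : ℕ :=
  ∑ᶠ U ∈ {U : Submodule K (Fin ℓ → K) | IsFlatOfRank A U 2}, ((locHyps A U).card - 1)

/-- The Euler–Ziegler multiplicity of the restricted hyperplane `H₀ ∩ ker(c)` of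
`A^{H₀}`: `m^{H₀}(X) = |m_X| - m(H₀)`. -/
noncomputable def EZmult (A : Arrangement K ℓ) (m : (Fin ℓ → K) → ℕ)
    (c₀ c : Fin ℓ → K) : ℕ :=
  (∑ c' ∈ A.hyps.filter (· ∈ Submodule.span K ({c₀, c} : Set (Fin ℓ → K))), m c') - m c₀

/-- Two covectors are parallel (define the same hyperplane). -/
def Parallel {n : ℕ} (b b' : Fin n → K) : Prop := ∃ t : K, t ≠ 0 ∧ b' = t • b

/-- The covector on `K^n` obtained by restricting the covector `c` on `K^{n+1}` to the
hyperplane `ker c₀`, transported by the linear isomorphism `e : ker c₀ ≃ K^n`. -/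
noncomputable def resCov {n : ℕ} (c₀ : Fin (n+1) → K)
    (e : ↥(LinearMap.ker (toFunc c₀)) ≃ₗ[K] (Fin n → K)) (c : Fin (n+1) → K) :
    Fin n → K :=
  fun j => toFunc c ((e.symm (Pi.single j 1) : ↥(LinearMap.ker (toFunc c₀))) : Fin (n+1) → K)

/-- `(B, mB)` is (a model, in coordinates, of) the Euler–Ziegler restriction
`(A^{H₀}, m^{H₀})` of `(A,m)` to the hyperplane `H₀ = ker c₀ ∈ A`. -/
def IsEZRes {n : ℕ} (A : Arrangement K (n+1)) (m : (Fin (n+1) → K) → ℕ)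
    (c₀ : Fin (n+1) → K) (B : Arrangement K n) (mB : (Fin n → K) → ℕ) : Prop :=
  c₀ ∈ A.hyps ∧
  ∃ e : ↥(LinearMap.ker (toFunc c₀)) ≃ₗ[K] (Fin n → K),
    (∀ c ∈ A.hyps.erase c₀, ∃ b ∈ B.hyps,
        Parallel b (resCov c₀ e c) ∧ mB b = EZmult A m c₀ c) ∧
    (∀ b ∈ B.hyps, ∃ c ∈ A.hyps.erase c₀, Parallel b (resCov c₀ e c))

/-- A combinatorial equivalence between two arrangements: a bijection between the
hyperplanes inducing an isomorphism of intersection lattices (it preserves the rank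
of every subset of hyperplanes). -/
def CombEquiv (A A' : Arrangement K ℓ) : Prop :=
  ∃ φ : (Fin ℓ → K) → (Fin ℓ → K), Set.BijOn φ ↑A.hyps ↑A'.hyps ∧
    ∀ T : Finset (Fin ℓ → K), T ⊆ A.hyps →
      Module.finrank K (Submodule.span K (T : Set (Fin ℓ → K))) =
      Module.finrank K (Submodule.span K ((T.image φ) : Set (Fin ℓ → K)))

lemma linForm_add (c c' : Fin ℓ → K) : linForm (c + c') = linForm c + linForm c' := by
  simp [linForm, add_mul, Finset.sum_add_distrib]

lemma linForm_smul (a : K) (c : Fin ℓ → K) : linForm (a • c) = C a * linForm c := by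
  simp [linForm, Finset.mul_sum, mul_assoc]

lemma linForm_sub (c c' : Fin ℓ → K) : linForm (c - c') = linForm c - linForm c' := by
  simp [linForm, sub_mul, Finset.sum_sub_distrib]

lemma linForm_single (i : Fin ℓ) : linForm (Pi.single i 1 : Fin ℓ → K) = X i := by
  simp [linForm, Pi.single_apply, ite_mul]

lemma coeff_linForm (c : Fin ℓ → K) (j : Fin ℓ) :
    coeff (Finsupp.single j 1) (linForm c) = c j := by
  simp [linForm, coeff_sum, coeff_C_mul, coeff_X, Finsupp.single_left_inj]

lemma linForm_injective : Function.Injective (linForm : (Fin ℓ → K) → S K ℓ) := fun c c' h => by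
  ext j
  rw [← coeff_linForm c, h, coeff_linForm]

lemma linForm_ne_zero {c : Fin ℓ → K} (hc : c ≠ 0) : linForm c ≠ 0 := fun h =>
  hc (linForm_injective (h.trans (by simp [linForm])))

lemma isHomogeneous_linForm (c : Fin ℓ → K) : (linForm c).IsHomogeneous 1 :=
  IsHomogeneous.sum _ _ _ fun i _ => isHomogeneous_C_mul_X (c i) i

lemma irreducible_linForm {c : Fin ℓ → K} (hc : c ≠ 0) : Irreducible (linForm c) := by
  obtain ⟨j, hj⟩ := Function.ne_iff.mp hc
  refine irreducible_of_totalDegree_eq_one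
    ((isHomogeneous_linForm c).totalDegree (linForm_ne_zero hc)) fun x hx => ?_
  refine isUnit_iff_ne_zero.mpr fun h0 => hj ?_
  have := hx (Finsupp.single j 1)
  rwa [coeff_linForm, h0, zero_dvd_iff] at this

lemma exists_smul_of_linForm_dvd {c c' : Fin ℓ → K} (hc' : c' ≠ 0)
    (h : linForm c ∣ linForm c') : ∃ t : K, c' = t • c := by
  obtain ⟨q, hq⟩ := h
  have hne := linForm_ne_zero hc'
  have hl : linForm c ≠ 0 := fun h => hne (by rw [hq, h, zero_mul])
  have hq0 : q ≠ 0 := fun h => hne (by rw [hq, h, mul_zero])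
  have hdeg := totalDegree_mul_of_isDomain hl hq0
  rw [← hq, (isHomogeneous_linForm c').totalDegree hne,
    (isHomogeneous_linForm c).totalDegree hl] at hdeg
  refine ⟨coeff 0 q, linForm_injective ?_⟩
  rw [linForm_smul, ← totalDegree_eq_zero_iff_eq_C.mp (by omega : q.totalDegree = 0), hq, mul_comm]

lemma isRelPrime_linForm {c c' : Fin ℓ → K} (hc : c ≠ 0) (hc' : c' ≠ 0)
    (h : ∀ t : K, c' ≠ t • c) : IsRelPrime (linForm c) (linForm c') :=
  (irreducible_linForm hc).isRelPrime_iff_not_dvd.mpr fun hd =>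
    (exists_smul_of_linForm_dvd hc' hd).elim h

lemma algHom_linForm {R : Type*} [CommRing R] [Algebra K R] (f : S K ℓ →ₐ[K] R)
    (c : Fin ℓ → K) : f (linForm c) = ∑ i, algebraMap K R (c i) * f (X i) := by
  simp [linForm, ← MvPolynomial.algebraMap_eq]

lemma derivation_linForm (θ : Der K ℓ) (c : Fin ℓ → K) :
    θ (linForm c) = ∑ i, C (c i) * θ (X i) := by
  simp [linForm, ← MvPolynomial.algebraMap_eq, Derivation.leibniz]

lemma derivation_C_mul (θ : Der K ℓ) (a : K) (p : S K ℓ) : θ (C a * p) = C a * θ p := by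
  simp [← MvPolynomial.algebraMap_eq, Derivation.leibniz]

/-- Over an arrangement, powers of the defining forms dividing `p` do so simultaneously. -/
lemma prod_linForm_pow_dvd (A : Arrangement K ℓ) (m : (Fin ℓ → K) → ℕ)
    {s : Finset (Fin ℓ → K)} (hs : s ⊆ A.hyps) {p : S K ℓ}
    (h : ∀ c ∈ s, linForm c ^ m c ∣ p) : ∏ c ∈ s, linForm c ^ m c ∣ p :=
  Finset.prod_dvd_of_isRelPrime (fun c hc c' hc' hne =>
    (isRelPrime_linForm (A.ne_zero c (hs hc)) (A.ne_zero c' (hs hc'))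
      (A.nonparallel c (hs hc) c' (hs hc') hne)).pow) h

/-- A common divisor of all entries of a combination of columns, one of whose coefficients
is a unit, divides the determinant. -/
lemma dvd_det_of_dvd_sum_col {R : Type*} [CommRing R] {n : ℕ} (M : Matrix (Fin n) (Fin n) R)
    (c : Fin n → R) (k : Fin n) (hk : IsUnit (c k)) {p : R}
    (h : ∀ i, p ∣ ∑ j, c j * M i j) : p ∣ M.det := by
  choose g hg using h
  have h1 := Matrix.det_updateCol_sum M k c
  have h2 : (fun i => ∑ j, c j • M i j) = p • g := by
    ext i
    simp [hg]
  rw [h2, Matrix.det_updateCol_smul, smul_eq_mul] at h1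
  exact (hk.dvd_mul_left).mp (h1 ▸ dvd_mul_right _ _)

/-- The coefficient matrix of a family of derivations. -/
noncomputable def coeffMatrix (θ : Fin ℓ → Der K ℓ) : Matrix (Fin ℓ) (Fin ℓ) (S K ℓ) :=
  Matrix.of fun i j => θ i (X j)

lemma prod_dvd_det_coeffMatrix (A : Arrangement K ℓ) (m : (Fin ℓ → K) → ℕ)
    (θ : Fin ℓ → Der K ℓ) (hθ : ∀ i, IsLogDer A m (θ i)) :
    ∏ c ∈ A.hyps, linForm c ^ m c ∣ (coeffMatrix θ).det := by
  refine prod_linForm_pow_dvd A m subset_rfl fun c hc => ?_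
  obtain ⟨k, hk⟩ := Function.ne_iff.mp (A.ne_zero c hc)
  refine dvd_det_of_dvd_sum_col _ (fun j => C (c j)) k ((isUnit_iff_ne_zero.mpr hk).map C)
    fun i => ?_
  simpa only [coeffMatrix, Matrix.of_apply, ← derivation_linForm] using hθ i c hc

/-- Expanding logarithmic derivations in a basis, the coefficient determinant of the basis
divides every coefficient determinant. -/
lemma det_coeffMatrix_dvd {A : Arrangement K ℓ} {m : (Fin ℓ → K) → ℕ}
    {θ : Fin ℓ → Der K ℓ} (hb : IsDerBasis A m θ) (η : Fin ℓ → Der K ℓ)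
    (hη : ∀ i, IsLogDer A m (η i)) : (coeffMatrix θ).det ∣ (coeffMatrix η).det := by
  choose f hf _ using fun i => hb.2 (η i) (hη i)
  have : coeffMatrix η = Matrix.of f * coeffMatrix θ := by
    ext1 i j
    have hs : ∀ T : Finset (Fin ℓ), (∑ l ∈ T, f i l • θ l) (X j) = ∑ l ∈ T, f i l * θ l (X j) := by
      intro T
      induction T using Finset.induction_on with
      | empty => simp
      | insert a T ha ih => simp [Finset.sum_insert ha, ih]
    rw [Matrix.mul_apply]
    simp only [coeffMatrix, Matrix.of_apply]
    rw [← hs, ← hf i]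
  rw [this, Matrix.det_mul]
  exact dvd_mul_left _ _

lemma det_coeffMatrix_dvd_pow {A : Arrangement K ℓ} {m : (Fin ℓ → K) → ℕ}
    {θ : Fin ℓ → Der K ℓ} (hb : IsDerBasis A m θ) {c : Fin ℓ → K} (hc : c ∈ A.hyps) :
    (coeffMatrix θ).det ∣
      linForm c ^ m c * (∏ c' ∈ A.hyps.erase c, linForm c' ^ m c') ^ ℓ := by
  obtain ⟨k, hk⟩ := Function.ne_iff.mp (A.ne_zero c hc)
  change c k ≠ 0 at hk
  set q := ∏ c' ∈ A.hyps.erase c, linForm c' ^ m c' with hq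
  let w : Fin ℓ → K := fun j => if j = k then 1 else -(c j / c k)
  let E : Matrix (Fin ℓ) (Fin ℓ) K := (1 : Matrix (Fin ℓ) (Fin ℓ) K).updateCol k w
  have hE : E.det = 1 := by
    rw [← Matrix.cramer_apply, Matrix.cramer_one]
    simp [w]
  let a : Fin ℓ → S K ℓ := fun j => q * if j = k then linForm c ^ m c else 1
  let η : Fin ℓ → Der K ℓ := fun j => a j • mkDerivation K fun i => C (E j i)
  have hrow : ∀ j, j ≠ k → ∑ i, c i * E j i = 0 := by
    intro j hj
    have : ∀ i, c i * E j i = (if i = j then c j else 0) + if i = k then -c j else 0 := by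
      intro i
      by_cases hik : i = k
      · subst hik
        simp only [E, Matrix.updateCol_self, w, hj, Ne.symm hj, if_false, if_true]
        field_simp
        ring
      · simp only [E, Matrix.updateCol_ne hik, Matrix.one_apply, hik, if_false, add_zero,
          eq_comm (a := j)]
        split_ifs with h <;> simp [h]
    simp [this, Finset.sum_add_distrib]
  have hlog : ∀ j, IsLogDer A m (η j) := by
    intro j c' hc'
    have hval : ∀ v : Fin ℓ → K, η j (linForm v) = a j * C (∑ i, v i * E j i) := by
      intro v
      simp [η, derivation_linForm, mkDerivation_X, Finset.mul_sum, mul_left_comm]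
    rw [hval]
    by_cases hcc : c' = c
    · subst hcc
      by_cases hj : j = k
      · simp only [a, hj, if_true]
        exact ((Dvd.intro_left _ rfl).mul_right _)
      · rw [hrow j hj]
        simp
    · exact ((Finset.dvd_prod_of_mem (fun c' => linForm c' ^ m c')
        (Finset.mem_erase.mpr ⟨hcc, hc'⟩)).mul_right _).mul_right _
  have hmat : coeffMatrix η = Matrix.of fun i j => a i * (E.map C) i j := by
    ext1 i j
    simp [coeffMatrix, η, mkDerivation_X]
  have hdet : (coeffMatrix η).det = linForm c ^ m c * q ^ ℓ := by
    have : (E.map (C : K →+* S K ℓ)).det = 1 := by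
      have h := RingHom.map_det (C : K →+* S K ℓ) E
      rw [hE, map_one] at h
      exact h.symm
    rw [hmat, Matrix.det_mul_column, this, mul_one]
    simp only [a, Finset.prod_mul_distrib, Finset.prod_const, Finset.card_univ, Fintype.card_fin,
      Finset.prod_ite_eq', Finset.mem_univ, if_true, mul_comm]
  exact hdet ▸ det_coeffMatrix_dvd hb η hlog

/-- **Saito's criterion** (necessity): the coefficient determinant of a basis of `D(A,m)` is a
nonzero scalar multiple of the defining polynomial of `(A,m)`. -/
lemma det_coeffMatrix_of_isDerBasis {A : Arrangement K ℓ} {m : (Fin ℓ → K) → ℕ}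
    {θ : Fin ℓ → Der K ℓ} (hb : IsDerBasis A m θ) (hA : A.hyps.Nonempty) :
    ∃ t : K, t ≠ 0 ∧ (coeffMatrix θ).det = C t * ∏ c ∈ A.hyps, linForm c ^ m c := by
  obtain ⟨u, hu⟩ := prod_dvd_det_coeffMatrix A m θ hb.1
  have hne : ∀ s ⊆ A.hyps, ∏ c ∈ s, linForm c ^ m c ≠ 0 := fun s hs =>
    Finset.prod_ne_zero_iff.mpr fun c hc => pow_ne_zero _ (linForm_ne_zero (A.ne_zero c (hs hc)))
  have hdvd : ∀ c ∈ A.hyps, u ∣ (∏ c' ∈ A.hyps.erase c, linForm c' ^ m c') ^ (ℓ - 1) := by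
    intro c hc
    have h := det_coeffMatrix_dvd_pow hb hc
    obtain ⟨k, -⟩ := Function.ne_iff.mp (A.ne_zero c hc)
    have hℓ : ℓ = ℓ - 1 + 1 := by have := k.pos; omega
    set q := ∏ c' ∈ A.hyps.erase c, linForm c' ^ m c' with hq
    have e : linForm c ^ m c * q ^ ℓ = (linForm c ^ m c * q) * q ^ (ℓ - 1) := by
      rw [mul_assoc, ← pow_succ', ← hℓ]
    rw [hu, e, hq, Finset.mul_prod_erase A.hyps (fun c => linForm c ^ m c) hc] at h
    exact (mul_dvd_mul_iff_left (hne _ subset_rfl)).mp h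
  have hfactor : ∀ p : S K ℓ, Irreducible p → p ∣ u → ∀ c ∈ A.hyps,
      ∃ c' ∈ A.hyps, c' ≠ c ∧ p ∣ linForm c' := by
    intro p hp hpu c hc
    obtain ⟨c', hc', hd⟩ := (hp.prime.dvd_finsetProd_iff _).mp
      (hp.prime.dvd_of_dvd_pow (hpu.trans (hdvd c hc)))
    exact ⟨c', Finset.mem_of_mem_erase hc', Finset.ne_of_mem_erase hc',
      hp.prime.dvd_of_dvd_pow hd⟩
  obtain ⟨c, hc⟩ := hA
  have hu0 : u ≠ 0 := fun h0 => by
    have := hdvd c hc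
    rw [h0, zero_dvd_iff] at this
    exact pow_ne_zero _ (hne _ (Finset.erase_subset _ _)) this
  have hunit : IsUnit u := by
    by_contra hnu
    obtain ⟨p, hp, hpu⟩ := WfDvdMonoid.exists_irreducible_factor hnu hu0
    obtain ⟨c₁, hc₁, -, h₁⟩ := hfactor p hp hpu c hc
    obtain ⟨c₂, hc₂, hne₂, h₂⟩ := hfactor p hp hpu c₁ hc₁
    exact hp.not_isUnit (isRelPrime_linForm (A.ne_zero _ hc₁) (A.ne_zero _ hc₂)
      (A.nonparallel c₁ hc₁ c₂ hc₂ hne₂.symm) h₁ h₂)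
  obtain ⟨t, ht, rfl⟩ := isUnit_iff_eq_C_of_isReduced.mp hunit
  exact ⟨t, ht.ne_zero, by rw [hu, mul_comm]⟩

lemma linForm_map (f : (Fin ℓ → K) →ₗ[K] (Fin ℓ → K)) (v : Fin ℓ → K) :
    linForm (f v) = ∑ i, C (v i) * linForm (f (Pi.single i 1)) := by
  let L : (Fin ℓ → K) →ₗ[K] S K ℓ :=
    { toFun := linForm
      map_add' := linForm_add
      map_smul' := fun a c => by simp [linForm_smul, smul_eq_C_mul] }
  have h : L (f v) = ∑ i, v i • L (f (Pi.single i 1)) := by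
    conv_lhs => rw [pi_eq_sum_univ' v]
    simp [map_sum, map_smul]
  simpa [smul_eq_C_mul, L] using h

/-- The covector in the class of `v` modulo `c₀` whose `k`-th coordinate vanishes. -/
noncomputable def resVec (c₀ : Fin ℓ → K) (k : Fin ℓ) (v : Fin ℓ → K) : Fin ℓ → K :=
  v - (v k / c₀ k) • c₀

/-- Restriction of polynomials to the hyperplane `ker c₀`, realized as the substitution which
eliminates the `k`-th variable. -/
noncomputable def restrict (c₀ : Fin ℓ → K) (k : Fin ℓ) : S K ℓ →ₐ[K] S K ℓ :=
  aeval fun i => X i - if i = k then C (c₀ k)⁻¹ * linForm c₀ else 0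

lemma restrict_linForm (c₀ : Fin ℓ → K) (k : Fin ℓ) (v : Fin ℓ → K) :
    restrict c₀ k (linForm v) = linForm (resVec c₀ k v) := by
  rw [algHom_linForm, resVec, linForm_sub, linForm_smul, div_eq_mul_inv, C_mul]
  simp [restrict, mul_sub, Finset.sum_sub_distrib, linForm, mul_assoc]

lemma resVec_self {c₀ : Fin ℓ → K} {k : Fin ℓ} (hk : c₀ k ≠ 0) : resVec c₀ k c₀ = 0 := by
  simp [resVec, hk]

lemma resVec_apply_self {c₀ : Fin ℓ → K} {k : Fin ℓ} (hk : c₀ k ≠ 0) (v : Fin ℓ → K) :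
    resVec c₀ k v k = 0 := by
  simp [resVec, hk]

lemma restrict_linForm_self {c₀ : Fin ℓ → K} {k : Fin ℓ} (hk : c₀ k ≠ 0) :
    restrict c₀ k (linForm c₀) = 0 := by
  rw [restrict_linForm, resVec_self hk]
  simp [linForm]

lemma restrict_C (c₀ : Fin ℓ → K) (k : Fin ℓ) (a : K) : restrict c₀ k (C a) = C a :=
  (restrict c₀ k).commutes a

lemma constantCoeff_restrict (c₀ : Fin ℓ → K) (k : Fin ℓ) (p : S K ℓ) :
    constantCoeff (restrict c₀ k p) = constantCoeff p := by
  induction p using MvPolynomial.induction_on with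
  | C a => simp [restrict]
  | add p q hp hq => simp [hp, hq]
  | mul_X p i hp =>
    rw [map_mul, map_mul, map_mul, constantCoeff_X, mul_zero]
    have : constantCoeff (restrict c₀ k (X i)) = 0 := by
      simp only [restrict, aeval_X, linForm]
      split_ifs <;> simp
    rw [this, mul_zero]

/-- The substitution rescaling the image of the projection `π` by a parameter. -/
noncomputable def dilate (π : (Fin ℓ → K) →ₗ[K] (Fin ℓ → K)) :
    S K ℓ →ₐ[K] Polynomial (S K ℓ) :=
  aeval fun i => Polynomial.C (linForm (Pi.single i 1 - π (Pi.single i 1))) +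
    Polynomial.X * Polynomial.C (linForm (π (Pi.single i 1)))

lemma dilate_linForm (π : (Fin ℓ → K) →ₗ[K] (Fin ℓ → K)) (v : Fin ℓ → K) :
    dilate π (linForm v) = Polynomial.C (linForm (v - π v)) +
      Polynomial.X * Polynomial.C (linForm (π v)) := by
  have h : ∀ a : K, algebraMap K (Polynomial (S K ℓ)) a = Polynomial.C (C a) := fun _ => rfl
  have hid := linForm_map (LinearMap.id - π) v
  simp only [LinearMap.sub_apply, LinearMap.id_apply] at hid
  rw [algHom_linForm, hid, linForm_map π]
  simp only [h, dilate, aeval_X, map_sum, map_mul, mul_add, Finset.sum_add_distrib,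
    Finset.mul_sum, mul_left_comm Polynomial.X]

lemma eval_one_dilate (π : (Fin ℓ → K) →ₗ[K] (Fin ℓ → K)) (p : S K ℓ) :
    (dilate π p).eval 1 = p := by
  induction p using MvPolynomial.induction_on with
  | C a =>
    rw [← algebraMap_eq, AlgHom.commutes]
    exact Polynomial.eval_C
  | add p q hp hq => simp [hp, hq]
  | mul_X p i hp =>
    rw [map_mul, Polynomial.eval_mul, hp]
    congr 1
    simp only [dilate, aeval_X, Polynomial.eval_add, Polynomial.eval_mul, Polynomial.eval_C,
      Polynomial.eval_X, one_mul, ← linForm_add]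
    simp [linForm_single]

/-- If `x` divides the images of all forms rescaled by `π`, then `x ^ e` divides the image of
every coefficient of degree `e`. -/
lemma pow_dvd_coeff_dilate (π : (Fin ℓ → K) →ₗ[K] (Fin ℓ → K)) (ρ : S K ℓ →ₐ[K] S K ℓ)
    {x : S K ℓ} (hx : ∀ v, x ∣ ρ (linForm (π v))) (p : S K ℓ) (e : ℕ) :
    x ^ e ∣ ρ ((dilate π p).coeff e) := by
  induction p using MvPolynomial.induction_on generalizing e with
  | C a =>
    rw [← algebraMap_eq, AlgHom.commutes]
    change x ^ e ∣ ρ ((Polynomial.C (C a)).coeff e)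
    rcases e with _ | e <;> simp [Polynomial.coeff_C]
  | add p q hp hq =>
    rw [map_add, Polynomial.coeff_add, map_add]
    exact dvd_add (hp e) (hq e)
  | mul_X p i hp =>
    rw [map_mul, dilate, aeval_X, ← dilate, mul_add, Polynomial.coeff_add, map_add, ← mul_assoc,
      Polynomial.coeff_mul_C, map_mul, Polynomial.coeff_mul_C, map_mul]
    refine dvd_add ((hp e).mul_right _) ?_
    rcases e with _ | e
    · simp
    · rw [Polynomial.coeff_mul_X, pow_succ]
      exact mul_dvd_mul (hp e) (hx _)

lemma mem_span_pair_swap {c₀ c c' : Fin ℓ → K} (h : ∀ t : K, c' ≠ t • c₀)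
    (hc' : c' ∈ Submodule.span K {c₀, c}) : c ∈ Submodule.span K {c₀, c'} := by
  obtain ⟨a, b, rfl⟩ := Submodule.mem_span_pair.mp hc'
  have hb : b ≠ 0 := fun h0 => h a (by simp [h0])
  refine Submodule.mem_span_pair.mpr ⟨-(b⁻¹ * a), b⁻¹, ?_⟩
  ext i
  simp
  field_simp
  ring

lemma span_pair_eq_of_mem {c₀ c c' : Fin ℓ → K} (h : ∀ t : K, c' ≠ t • c₀)
    (hc' : c' ∈ Submodule.span K {c₀, c}) :
    Submodule.span K {c₀, c'} = Submodule.span K {c₀, c} := by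
  refine le_antisymm (Submodule.span_le.mpr ?_) (Submodule.span_le.mpr ?_)
  · exact Set.insert_subset (Submodule.subset_span (by simp)) (by simpa using hc')
  · exact Set.insert_subset (Submodule.subset_span (by simp))
      (by simpa using mem_span_pair_swap h hc')

lemma isFlatOfRank_span_pair {A : Arrangement K ℓ} {c₀ c : Fin ℓ → K} (h₀ : c₀ ∈ A.hyps)
    (hc : c ∈ A.hyps) (hne : c ≠ c₀) : IsFlatOfRank A (Submodule.span K {c₀, c}) 2 := by
  constructor
  · have hli : LinearIndependent K ![c₀, c] :=
      (LinearIndependent.pair_iff' (A.ne_zero c₀ h₀)).mpr fun a ha =>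
        A.nonparallel c₀ h₀ c hc hne.symm a ha.symm
    have h := finrank_span_eq_card hli
    rwa [Matrix.range_cons_cons_empty, Fintype.card_fin] at h
  · refine le_antisymm (Submodule.span_le.mpr fun v hv => (Finset.mem_filter.mp hv).2)
      (Submodule.span_mono ?_)
    rintro v (rfl | rfl)
    · exact Finset.mem_filter.mpr ⟨h₀, Submodule.subset_span (by simp)⟩
    · exact Finset.mem_filter.mpr ⟨hc, Submodule.subset_span (by simp)⟩

lemma prod_restrict_pow_associated {A : Arrangement K ℓ} (m : (Fin ℓ → K) → ℕ)
    {c₀ : Fin ℓ → K} (h₀ : c₀ ∈ A.hyps) {k : Fin ℓ} (hk : c₀ k ≠ 0) (c : Fin ℓ → K) :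
    Associated
      (∏ c' ∈ (locHyps A (Submodule.span K {c₀, c})).erase c₀, restrict c₀ k (linForm c') ^ m c')
      (restrict c₀ k (linForm c) ^
        ∑ c' ∈ (locHyps A (Submodule.span K {c₀, c})).erase c₀, m c') := by
  rw [← Finset.prod_pow_eq_pow_sum]
  refine Associated.prod _ _ _ fun c' hc' => Associated.pow_pow ?_
  obtain ⟨hne, hc'⟩ := Finset.mem_erase.mp hc'
  obtain ⟨hA, hU⟩ := Finset.mem_filter.mp hc'
  obtain ⟨a, b, rfl⟩ := Submodule.mem_span_pair.mp hU
  have hb : b ≠ 0 := fun h0 =>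
    A.nonparallel c₀ h₀ _ hA hne.symm a (by simp [h0])
  rw [linForm_add, linForm_smul, linForm_smul, map_add, map_mul, restrict_linForm_self hk,
    mul_zero, zero_add, map_mul]
  refine (associated_isUnit_mul_left_iff ?_).mpr (Associated.refl _)
  exact ((isUnit_iff_ne_zero.mpr hb).map (C : K →+* S K ℓ)).map (restrict c₀ k)

/-- The restriction of a logarithmic derivation to a locally heavy hyperplane is logarithmic for
the Euler–Ziegler multiplicity. -/
lemma pow_restrict_dvd_restrict_of_isLogDer {A : Arrangement K ℓ} {m : (Fin ℓ → K) → ℕ}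
    {c₀ : Fin ℓ → K} (hlh : IsLocallyHeavy A m c₀) {k : Fin ℓ} (hk : c₀ k ≠ 0) {θ : Der K ℓ}
    (hθ : IsLogDer A m θ) {c : Fin ℓ → K} (hc : c ∈ A.hyps) (hne : c ≠ c₀) :
    restrict c₀ k (linForm c) ^ (∑ c' ∈ (locHyps A (Submodule.span K {c₀, c})).erase c₀, m c') ∣
      restrict c₀ k (θ (linForm c)) := by
  set U := Submodule.span K {c₀, c} with hU
  set T := (locHyps A U).erase c₀ with hT
  have h₀U : c₀ ∈ locHyps A U :=
    Finset.mem_filter.mpr ⟨hlh.1, Submodule.subset_span (by simp)⟩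
  have hcT : c ∈ T := Finset.mem_erase.mpr
    ⟨hne, Finset.mem_filter.mpr ⟨hc, Submodule.subset_span (by simp)⟩⟩
  by_cases hcard : 3 ≤ (locHyps A U).card
  swap
  · have hT1 : T = {c} := by
      refine Finset.eq_singleton_iff_unique_mem.mpr ⟨hcT, fun y hy => ?_⟩
      refine Finset.card_le_one.mp ?_ y hy c hcT
      rw [hT, Finset.card_erase_of_mem h₀U]
      omega
    rw [hT1, Finset.sum_singleton, ← map_pow]
    exact map_dvd _ (hθ c hc)
  have hheavy := hlh.2 U (isFlatOfRank_span_pair hlh.1 hc hne)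
    (Finset.mem_filter.mp h₀U).2 hcard
  obtain ⟨π', hπ'⟩ := LinearMap.exists_leftInverse_of_injective U.subtype U.ker_subtype
  let π : (Fin ℓ → K) →ₗ[K] (Fin ℓ → K) := U.subtype ∘ₗ π'
  have hπU : ∀ v ∈ U, π v = v := fun v hv =>
    congrArg Subtype.val (LinearMap.congr_fun hπ' ⟨v, hv⟩)
  have hπ_mem : ∀ v, π v ∈ U := fun v => (π' v).2
  have hdil : ∀ v ∈ U, dilate π (linForm v) = Polynomial.X * Polynomial.C (linForm v) := by
    intro v hv
    rw [dilate_linForm, hπU v hv]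
    simp [linForm]
  have hx : ∀ v, restrict c₀ k (linForm c) ∣ restrict c₀ k (linForm (π v)) := by
    intro v
    obtain ⟨a, b, hab⟩ := Submodule.mem_span_pair.mp (hπ_mem v)
    rw [← hab, linForm_add, linForm_smul, linForm_smul, map_add, map_mul,
      restrict_linForm_self hk, mul_zero, zero_add, map_mul]
    exact dvd_mul_left _ _
  have hlow : ∀ e < m c₀, ∏ c' ∈ T, linForm c' ^ m c' ∣ (dilate π (θ (linForm c))).coeff e := by
    intro e he
    refine prod_linForm_pow_dvd A m ((Finset.erase_subset _ _).trans (Finset.filter_subset _ _))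
      fun c' hc' => ?_
    obtain ⟨hne', hc'⟩ := Finset.mem_erase.mp hc'
    obtain ⟨hA', hU'⟩ := Finset.mem_filter.mp hc'
    obtain ⟨a, b, hab⟩ := Submodule.mem_span_pair.mp hU'
    have hb : b ≠ 0 := fun h0 =>
      A.nonparallel c₀ hlh.1 _ hA' hne'.symm a (by simp [← hab, h0])
    obtain ⟨g, hg⟩ := hθ c₀ hlh.1
    obtain ⟨h, hh⟩ := hθ c' hA'
    have hlin : θ (linForm c') = C a * θ (linForm c₀) + C b * θ (linForm c) := by
      rw [← hab, linForm_add, linForm_smul, linForm_smul, map_add, derivation_C_mul,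
        derivation_C_mul]
    have hCC : ∀ a : K, dilate π (C a) = Polynomial.C (C a) := fun a =>
      (dilate π).commutes a
    have key := congrArg (fun p => (dilate π p).coeff e) (hlin.symm.trans hh)
    simp only [hg, map_add, map_mul, map_pow, hdil c' hU', hdil c₀ (Finset.mem_filter.mp h₀U).2,
      hCC, mul_pow, Polynomial.coeff_add, Polynomial.coeff_C_mul] at key
    rw [mul_assoc (Polynomial.X ^ m c₀), Polynomial.coeff_X_pow_mul', if_neg (by omega),
      mul_zero, zero_add] at key
    have hd : linForm c' ^ m c' ∣ C b * (dilate π (θ (linForm c))).coeff e := by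
      rw [key]
      refine (Polynomial.C_dvd_iff_dvd_coeff _ _).mp ?_ e
      rw [map_pow]
      exact (dvd_mul_left _ _).mul_right _
    exact (((isUnit_iff_ne_zero.mpr hb).map (C : K →+* S K ℓ)).dvd_mul_left).mp hd
  rw [← eval_one_dilate π (θ (linForm c)), Polynomial.eval_eq_sum_range, map_sum]
  refine Finset.dvd_sum fun e _ => ?_
  rw [one_pow, mul_one]
  by_cases he : e < m c₀
  · refine (prod_restrict_pow_associated m hlh.1 hk c).symm.dvd.trans ?_
    have := map_dvd (restrict c₀ k) (hlow e he)
    simpa only [map_prod, map_pow] using this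
  · exact (pow_dvd_pow _ (hheavy.trans (not_lt.mp he))).trans
      (pow_dvd_coeff_dilate π _ hx _ e)

lemma resVec_ne_zero {A : Arrangement K ℓ} {c₀ c : Fin ℓ → K} (h₀ : c₀ ∈ A.hyps)
    (hc : c ∈ A.hyps) (hne : c ≠ c₀) (k : Fin ℓ) : resVec c₀ k c ≠ 0 := fun h =>
  A.nonparallel c₀ h₀ c hc hne.symm _ (sub_eq_zero.mp h)

/-- Grouping the hyperplanes by their intersection with `ker c₀`: a polynomial divisible by the
restricted forms with Euler–Ziegler multiplicities is divisible by their total product. -/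
lemma prod_restrict_pow_dvd {A : Arrangement K ℓ} {m : (Fin ℓ → K) → ℕ} {c₀ : Fin ℓ → K}
    (h₀ : c₀ ∈ A.hyps) {k : Fin ℓ} (hk : c₀ k ≠ 0) {p : S K ℓ}
    (h : ∀ c ∈ A.hyps, c ≠ c₀ → restrict c₀ k (linForm c) ^
      (∑ c' ∈ (locHyps A (Submodule.span K {c₀, c})).erase c₀, m c') ∣ p) :
    ∏ c ∈ A.hyps.erase c₀, restrict c₀ k (linForm c) ^ m c ∣ p := by
  have hpar : ∀ c ∈ A.hyps.erase c₀, ∀ t : K, c ≠ t • c₀ := fun c hc =>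
    A.nonparallel c₀ h₀ c (Finset.mem_of_mem_erase hc) (Finset.ne_of_mem_erase hc).symm
  let key : (Fin ℓ → K) → Submodule K (Fin ℓ → K) := fun c => Submodule.span K {c₀, c}
  have hfiber : ∀ c ∈ A.hyps.erase c₀,
      (A.hyps.erase c₀).filter (fun c' => key c' = key c) = (locHyps A (key c)).erase c₀ := by
    intro c hc
    ext c'
    simp only [Finset.mem_filter, Finset.mem_erase, locHyps]
    constructor
    · rintro ⟨⟨hne, hA⟩, hkey⟩
      exact ⟨hne, hA, hkey ▸ Submodule.subset_span (by simp)⟩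
    · rintro ⟨hne, hA, hmem⟩
      exact ⟨⟨hne, hA⟩, span_pair_eq_of_mem (hpar c' (Finset.mem_erase.mpr ⟨hne, hA⟩)) hmem⟩
  rw [← Finset.prod_fiberwise_of_maps_to (g := key) (t := (A.hyps.erase c₀).image key)
    fun c hc => Finset.mem_image_of_mem key hc]
  refine Finset.prod_dvd_of_isRelPrime ?_ ?_
  · intro U _ U' _ hUU'
    refine IsRelPrime.prod_left fun c hc => IsRelPrime.prod_right fun c' hc' => IsRelPrime.pow ?_
    obtain ⟨hc, hU⟩ := Finset.mem_filter.mp hc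
    obtain ⟨hc', hU'⟩ := Finset.mem_filter.mp hc'
    obtain ⟨hne, hA⟩ := Finset.mem_erase.mp hc
    obtain ⟨hne', hA'⟩ := Finset.mem_erase.mp hc'
    rw [restrict_linForm, restrict_linForm]
    refine isRelPrime_linForm (resVec_ne_zero h₀ hA hne k) (resVec_ne_zero h₀ hA' hne' k)
      fun t ht => hUU' ?_
    rw [← hU, ← hU']
    refine span_pair_eq_of_mem (hpar c hc) (mem_span_pair_swap (hpar c' hc') ?_)
    refine Submodule.mem_span_pair.mpr ⟨c' k / c₀ k - t * (c k / c₀ k), t, ?_⟩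
    rw [resVec, resVec, sub_eq_iff_eq_add] at ht
    refine Eq.trans ?_ ht.symm
    rw [smul_sub, sub_smul, smul_smul]
    abel
  · intro U hU
    obtain ⟨c, hc, rfl⟩ := Finset.mem_image.mp hU
    obtain ⟨hne, hA⟩ := Finset.mem_erase.mp hc
    rw [hfiber c hc]
    exact (prod_restrict_pow_associated m h₀ hk c).dvd.trans (h c hA hne)

/-- If the product of a power of a linear form with `g` is homogeneous and `g` has a nonzero
constant term, then `g` is constant. -/
lemma eq_and_mul_eq_of_isHomogeneous {c : Fin ℓ → K} (hc : c ≠ 0) {n d : ℕ} {g : S K ℓ}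
    (hg : constantCoeff g ≠ 0) (h : (linForm c ^ n * g).IsHomogeneous d) :
    d = n ∧ linForm c ^ n * g = C (constantCoeff g) * linForm c ^ n := by
  have hpow : (linForm c ^ n).IsHomogeneous n := by
    simpa using (isHomogeneous_linForm c).pow n
  have hcomp : homogeneousComponent n (linForm c ^ n * g) =
      C (constantCoeff g) * linForm c ^ n := by
    conv_lhs => rw [← sum_homogeneousComponent (φ := g), Finset.mul_sum, map_sum]
    rw [Finset.sum_eq_single_of_mem 0 (by simp)]
    · rw [homogeneousComponent_zero, mul_comm]
      have h0 := (isHomogeneous_C (Fin ℓ) (coeff 0 g)).mul hpow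
      rw [zero_add] at h0
      exact homogeneousComponent_eq_self h0
    · intro i _ hi
      rw [homogeneousComponent_of_mem (hpow.mul (homogeneousComponent_isHomogeneous i g)),
        if_neg (by omega)]
  have hne : C (constantCoeff g) * linForm c ^ n ≠ 0 :=
    mul_ne_zero (by simpa using hg) (pow_ne_zero _ (linForm_ne_zero hc))
  rw [homogeneousComponent_of_mem h] at hcomp
  split_ifs at hcomp with hnd
  · exact ⟨hnd.symm, hcomp⟩
  · exact absurd hcomp.symm hne

theorem stmt4 (A : Arrangement K ℓ) (m : (Fin ℓ → K) → ℕ)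
    (hm : ∀ c ∈ A.hyps, 0 < m c) (c₀ : Fin ℓ → K) (hlh : IsLocallyHeavy A m c₀)
    (θ : Fin ℓ → Der K ℓ) (d : Fin ℓ → ℕ)
    (hhom : ∀ i, IsHomogOfDeg (θ i) (d i)) (hb : IsDerBasis A m θ) :
    ∃ j, d j = m c₀ ∧ ∃ t : K, t ≠ 0 ∧
      θ j (linForm c₀) = MvPolynomial.C t * (linForm c₀) ^ (m c₀) := by
  obtain ⟨k, hk⟩ := Function.ne_iff.mp (A.ne_zero c₀ hlh.1)
  change c₀ k ≠ 0 at hk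
  choose g hg using fun i => hb.1 i c₀ hlh.1
  obtain ⟨t, ht, hdet⟩ := det_coeffMatrix_of_isDerBasis hb ⟨c₀, hlh.1⟩
  set q := ∏ c ∈ A.hyps.erase c₀, linForm c ^ m c with hq
  let N := (coeffMatrix θ).updateCol k g
  have hN : N.det = C (c₀ k * t) * q := by
    have h1 := Matrix.det_updateCol_sum (coeffMatrix θ) k fun j => C (c₀ j)
    have h2 : (fun i => ∑ j, (C (c₀ j) : S K ℓ) • coeffMatrix θ i j) = linForm c₀ ^ m c₀ • g := by
      ext1 i
      simp only [coeffMatrix, Matrix.of_apply, smul_eq_mul, Pi.smul_apply,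
        ← derivation_linForm, hg]
    rw [h2, Matrix.det_updateCol_smul, hdet, smul_eq_mul,
      ← Finset.mul_prod_erase A.hyps (fun c => linForm c ^ m c) hlh.1, ← hq] at h1
    refine mul_left_cancel₀ (pow_ne_zero (m c₀) (linForm_ne_zero (A.ne_zero c₀ hlh.1))) ?_
    rw [h1, C_mul]
    ring
  let R := N.map (restrict c₀ k)
  have hR : R.det = C (c₀ k * t) * restrict c₀ k q := by
    have h := AlgHom.map_det (restrict c₀ k) N
    rw [hN, map_mul, restrict_C] at h
    exact h.symm
  have hexpand : R.det = ∑ i, restrict c₀ k (g i) * R.cramer (Pi.single i 1) k := by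
    have hself : R = R.updateCol k fun i => restrict c₀ k (g i) := by
      ext1 i j
      by_cases hj : j = k
      · subst hj
        simp [R, N]
      · simp [Matrix.updateCol_ne hj]
    conv_lhs => rw [hself, ← Matrix.cramer_apply, pi_eq_sum_univ' fun i => restrict c₀ k (g i)]
    simp [map_sum, Finset.sum_apply]
  have hminor : ∀ i, restrict c₀ k q ∣ R.cramer (Pi.single i 1) k := by
    intro i
    rw [hq, map_prod]
    simp only [map_pow]
    refine prod_restrict_pow_dvd hlh.1 hk fun c hc hne => ?_
    obtain ⟨l, hl⟩ := Function.ne_iff.mp (resVec_ne_zero hlh.1 hc hne k)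
    rw [Matrix.cramer_apply]
    refine dvd_det_of_dvd_sum_col _ (fun j => C (resVec c₀ k c j)) l
      ((isUnit_iff_ne_zero.mpr hl).map C) fun i' => ?_
    have hsum : ∑ j, C (resVec c₀ k c j) * R.updateCol k (Pi.single i 1) i' j =
        restrict c₀ k (θ i' (linForm c)) := by
      have hz : restrict c₀ k (θ i' (linForm c₀)) = 0 := by
        rw [hg, map_mul, map_pow, restrict_linForm_self hk,
          zero_pow (hm c₀ hlh.1).ne', zero_mul]
      have hres : restrict c₀ k (θ i' (linForm c)) =
          restrict c₀ k (θ i' (linForm (resVec c₀ k c))) := by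
        rw [resVec, linForm_sub, linForm_smul, map_sub, derivation_C_mul, map_sub, map_mul,
          hz, mul_zero, sub_zero]
      rw [hres, derivation_linForm, map_sum]
      refine Finset.sum_congr rfl fun j _ => ?_
      rw [map_mul]
      by_cases hj : j = k
      · subst hj
        simp [resVec_apply_self hk]
      · rw [Matrix.updateCol_ne hj, restrict_C]
        simp [R, N, Matrix.updateCol_ne hj, coeffMatrix]
    rw [hsum]
    exact pow_restrict_dvd_restrict_of_isLogDer hlh hk (hb.1 i') hc hne
  choose e he using hminor
  have hq0 : restrict c₀ k q ≠ 0 := by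
    rw [hq, map_prod]
    refine Finset.prod_ne_zero_iff.mpr fun c hc => ?_
    rw [map_pow, restrict_linForm]
    exact pow_ne_zero _ (linForm_ne_zero (resVec_ne_zero hlh.1 (Finset.mem_of_mem_erase hc)
      (Finset.ne_of_mem_erase hc) k))
  have hunit : C (c₀ k * t) = ∑ i, restrict c₀ k (g i) * e i := by
    refine mul_right_cancel₀ hq0 ?_
    rw [← hR, hexpand, Finset.sum_mul]
    refine Finset.sum_congr rfl fun i _ => ?_
    rw [he]
    ring
  obtain ⟨j, hj⟩ : ∃ j, constantCoeff (g j) ≠ 0 := by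
    by_contra! hall
    have := congrArg constantCoeff hunit
    simp [constantCoeff_restrict, hall, hk, ht] at this
  have hhomj := hhom j c₀
  rw [hg] at hhomj
  obtain ⟨hd, hval⟩ := eq_and_mul_eq_of_isHomogeneous (A.ne_zero c₀ hlh.1) hj hhomj
  exact ⟨j, hd, constantCoeff (g j), hj, by rw [hg, hval]⟩

end ArrPaper
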